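/- arXiv:2107.08086 — 3 statements merged into one kernel-verified Lean document; each statement's English description precedes it below -/
import Mathlib

section
/- (Proposition 1, exact ARMA fit of a linear system.) Suppose O_q has full column rank, i.e., rank O_q = n (equivalently O_qᵀ O_q is invertible), and set O_q⁺ := (O_qᵀ O_q)^{−1} O_qᵀ. Define the p×p matrices α_1, …, α_q by the block row [α_1 | α_2 | … | α_q] = C A^q O_q⁺ ∈ ℝ^{p×qp}, and the p×m matrices β_1, …, β_q by the block row [β_1 | β_2 | … | β_q] = [C B | C A B | … | C A^{q−1} B] − C A^q O_q⁺ H_q ∈ ℝ^{p×qm}. Then for every pair of sequences x : ℕ → ℝ^n, u : ℕ → ℝ^m with x_{k+1} = A x_k + B u_k for all k, the outputs z_k = C x_k satisfy the order-q ARMA relation z_t = Σ_{i=1}^{q} α_i z_{t−i} + Σ_{i=1}^{q} β_i u_{t−i} for all t ≥ q. -/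
open Matrix Finset

/-- The observability-type matrix `O_q = [C A^{q−1}; C A^{q−2}; …; C A; C]`. -/
def Oq {n p : ℕ} (A : Matrix (Fin n) (Fin n) ℝ) (C : Matrix (Fin p) (Fin n) ℝ)
    (q : ℕ) : Matrix (Fin q × Fin p) (Fin n) ℝ :=
  Matrix.of fun ir c => (C * A ^ (q - 1 - (ir.1 : ℕ))) ir.2 c

/-- The block Toeplitz matrix `H_q` whose (0-indexed) `(i,j)` block is
`C A^{j−i−1} B` if `j > i` and `0` otherwise. -/
def Hq {n m p : ℕ} (A : Matrix (Fin n) (Fin n) ℝ) (B : Matrix (Fin n) (Fin m) ℝ)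
    (C : Matrix (Fin p) (Fin n) ℝ) (q : ℕ) :
    Matrix (Fin q × Fin p) (Fin q × Fin m) ℝ :=
  Matrix.of fun ir jc =>
    if (ir.1 : ℕ) < (jc.1 : ℕ) then
      (C * A ^ ((jc.1 : ℕ) - (ir.1 : ℕ) - 1) * B) ir.2 jc.2
    else 0

/-- The left pseudoinverse `O_q⁺ = (O_qᵀ O_q)⁻¹ O_qᵀ`. -/
noncomputable def OqPinv {n p : ℕ} (A : Matrix (Fin n) (Fin n) ℝ) (C : Matrix (Fin p) (Fin n) ℝ)
    (q : ℕ) : Matrix (Fin n) (Fin q × Fin p) ℝ :=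
  ((Oq A C q)ᵀ * Oq A C q)⁻¹ * (Oq A C q)ᵀ

/-- The block row `[C B | C A B | … | C A^{q−1} B]` (block `j`, 0-indexed, is `C A^j B`). -/
def Mrow {n m p : ℕ} (A : Matrix (Fin n) (Fin n) ℝ) (B : Matrix (Fin n) (Fin m) ℝ)
    (C : Matrix (Fin p) (Fin n) ℝ) (q : ℕ) :
    Matrix (Fin p) (Fin q × Fin m) ℝ :=
  Matrix.of fun r jc => (C * A ^ (jc.1 : ℕ) * B) r jc.2

/-!
Write `R_q = [B | A B | … | A^(q-1) B]`, and let `ζ`, `υ` be the stacked outputs and inputs at the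
times `t - 1, …, t - q`. Solving the recursion from time `t - q` gives

  `z_t = C A^q x_(t-q) + C R_q υ`  and  `ζ = O_q x_(t-q) + H_q υ`.

If `K O_q = C A^q`, applying `K` to the second equation expresses `C A^q x_(t-q)` as
`K ζ - K H_q υ`, which eliminates the state from the first. Full column rank provides
`K = C A^q O_q⁺`. The stacked equation is proved by induction on `q` from the block recursions
`R_(q+1) = [B | A R_q]`, `O_(q+1) = [C A^q; O_q]` and `H_(q+1) = [0 | C R_q; 0 | H_q]`.
-/

section Pseudoinverse

variable {m n 𝕜 : Type*} [Fintype n] [DecidableEq n] [Field 𝕜]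

theorem isUnit_of_rank_eq_card {M : Matrix n n 𝕜} (hM : M.rank = Fintype.card n) : IsUnit M :=
  linearIndependent_cols_iff_isUnit.mp <|
    linearIndependent_iff_card_eq_finrank_span.mpr (hM.symm.trans M.rank_eq_finrank_span_cols)

theorem nonsing_inv_transpose_mul_self_mul_transpose_mul_self [Fintype m] [LinearOrder 𝕜]
    [IsStrictOrderedRing 𝕜] {M : Matrix m n 𝕜} (hM : M.rank = Fintype.card n) :
    (Mᵀ * M)⁻¹ * Mᵀ * M = 1 := by
  have gram_isUnit : IsUnit (Mᵀ * M) :=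
    isUnit_of_rank_eq_card ((rank_transpose_mul_self M).trans hM)
  rw [Matrix.mul_assoc, nonsing_inv_mul _ ((isUnit_iff_isUnit_det _).mp gram_isUnit)]

end Pseudoinverse

/-- The stacked vector `(v (t - 1); …; v (t - q))` of the last `q` values before time `t`, most
recent first. It has this meaning only for `q ≤ t`, since the subtraction is truncated. -/
def pastWindow {R κ : Type*} (v : ℕ → κ → R) (q t : ℕ) : Fin q × κ → R :=
  fun ik => v (t - 1 - ik.1) ik.2

theorem pastWindow_succ_succ {R κ : Type*} (v : ℕ → κ → R) (q t : ℕ) (i : Fin q) (k : κ) :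
    pastWindow v (q + 1) (t + 1) (i.succ, k) = pastWindow v q t (i, k) := by
  simp only [pastWindow, Fin.val_succ, Nat.add_sub_cancel, Nat.sub_sub, Nat.add_comm]

theorem mulVec_pastWindow_succ {R κ μ : Type*} [NonUnitalNonAssocSemiring R] [Fintype μ] {q : ℕ}
    (M : Matrix κ (Fin (q + 1) × μ) R) (u : ℕ → μ → R) (t : ℕ) :
    M *ᵥ pastWindow u (q + 1) (t + 1) =
      M.submatrix id (Prod.mk 0) *ᵥ u t +
        M.submatrix id (Prod.map Fin.succ id) *ᵥ pastWindow u q t := by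
  ext a
  simp only [mulVec, dotProduct, Fintype.sum_prod_type, Fin.sum_univ_succ, Pi.add_apply,
    pastWindow_succ_succ]
  rfl

section BlockMatrices

variable {R ι μ ω : Type*} [Semiring R] [Fintype ι] [DecidableEq ι]

/-- The reachability matrix `[B | A B | … | A^(q-1) B]`. -/
def reachabilityMatrix (A : Matrix ι ι R) (B : Matrix ι μ R) (q : ℕ) :
    Matrix ι (Fin q × μ) R :=
  of fun a jc => (A ^ (jc.1 : ℕ) * B) a jc.2

/-- The observability matrix `[C A^(q-1); …; C A; C]` with entries in any semiring, which is `Oq`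
for real matrices. The powers decrease because `pastWindow` lists the most recent value first. -/
def observabilityMatrix (A : Matrix ι ι R) (C : Matrix ω ι R) (q : ℕ) :
    Matrix (Fin q × ω) ι R :=
  of fun ir a => (C * A ^ (q - 1 - (ir.1 : ℕ))) ir.2 a

/-- The block Toeplitz matrix of the Markov parameters `C A^k B` with entries in any semiring,
which is `Hq` for real matrices. It maps the past inputs to their contribution to the past
outputs, both stacked as in `pastWindow`. -/
def markovToeplitz (A : Matrix ι ι R) (B : Matrix ι μ R) (C : Matrix ω ι R) (q : ℕ) :
    Matrix (Fin q × ω) (Fin q × μ) R :=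
  of fun ir jc =>
    if (ir.1 : ℕ) < (jc.1 : ℕ) then
      (C * A ^ ((jc.1 : ℕ) - (ir.1 : ℕ) - 1) * B) ir.2 jc.2
    else 0

theorem mul_reachabilityMatrix_apply {κ : Type*} (D : Matrix κ ι R) (A : Matrix ι ι R)
    (B : Matrix ι μ R) (q : ℕ) (r : κ) (j : Fin q) (c : μ) :
    (D * reachabilityMatrix A B q) r (j, c) = (D * A ^ (j : ℕ) * B) r c := by
  rw [Matrix.mul_assoc]
  rfl

theorem reachabilityMatrix_succ_submatrix_zero (A : Matrix ι ι R) (B : Matrix ι μ R) (q : ℕ) :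
    (reachabilityMatrix A B (q + 1)).submatrix id (Prod.mk 0) = B := by
  ext a c
  simp [reachabilityMatrix]

theorem reachabilityMatrix_succ_submatrix_succ (A : Matrix ι ι R) (B : Matrix ι μ R) (q : ℕ) :
    (reachabilityMatrix A B (q + 1)).submatrix id (Prod.map Fin.succ id) =
      A * reachabilityMatrix A B q := by
  ext a ⟨j, c⟩
  rw [mul_reachabilityMatrix_apply, ← pow_succ']
  rfl

theorem observabilityMatrix_succ_submatrix_zero (A : Matrix ι ι R) (C : Matrix ω ι R) (q : ℕ) :
    (observabilityMatrix A C (q + 1)).submatrix (Prod.mk 0) id = C * A ^ q :=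
  rfl

theorem observabilityMatrix_succ_submatrix_succ (A : Matrix ι ι R) (C : Matrix ω ι R) (q : ℕ) :
    (observabilityMatrix A C (q + 1)).submatrix (Prod.map Fin.succ id) id =
      observabilityMatrix A C q := by
  ext ⟨i, r⟩ a
  simp [observabilityMatrix, Nat.sub_sub, Nat.add_comm]

theorem markovToeplitz_succ_submatrix_zero (A : Matrix ι ι R) (B : Matrix ι μ R)
    (C : Matrix ω ι R) (q : ℕ) :
    (markovToeplitz A B C (q + 1)).submatrix id (Prod.mk 0) = 0 := by
  ext ⟨i, r⟩ c
  simp [markovToeplitz]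

theorem markovToeplitz_succ_submatrix_zero_succ (A : Matrix ι ι R) (B : Matrix ι μ R)
    (C : Matrix ω ι R) (q : ℕ) :
    (markovToeplitz A B C (q + 1)).submatrix (Prod.mk 0) (Prod.map Fin.succ id) =
      C * reachabilityMatrix A B q := by
  ext r ⟨j, c⟩
  simp [markovToeplitz, mul_reachabilityMatrix_apply]

theorem markovToeplitz_succ_submatrix_succ_succ (A : Matrix ι ι R) (B : Matrix ι μ R)
    (C : Matrix ω ι R) (q : ℕ) :
    (markovToeplitz A B C (q + 1)).submatrix (Prod.map Fin.succ id) (Prod.map Fin.succ id) =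
      markovToeplitz A B C q := by
  ext ⟨i, r⟩ ⟨j, c⟩
  simp [markovToeplitz]

end BlockMatrices

/-- `x` is a state trajectory of the discrete-time linear system `x (k + 1) = A x k + B u k` driven
by the input sequence `u`. -/
def IsTrajectory {R ι μ : Type*} [NonUnitalNonAssocSemiring R] [Fintype ι] [Fintype μ]
    (A : Matrix ι ι R) (B : Matrix ι μ R) (x : ℕ → ι → R) (u : ℕ → μ → R) : Prop :=
  ∀ k, x (k + 1) = A *ᵥ x k + B *ᵥ u k

namespace IsTrajectory

variable {R ι μ ω : Type*} [Semiring R] [Fintype ι] [DecidableEq ι] [Fintype μ]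
  {A : Matrix ι ι R} {B : Matrix ι μ R} {x : ℕ → ι → R} {u : ℕ → μ → R}

theorem state_add (hx : IsTrajectory A B x u) (s k : ℕ) :
    x (s + k) = A ^ k *ᵥ x s + reachabilityMatrix A B k *ᵥ pastWindow u k (s + k) := by
  induction k with
  | zero =>
    rw [Subsingleton.elim (pastWindow u 0 (s + 0)) 0, mulVec_zero, pow_zero, one_mulVec,
      Nat.add_zero, add_zero]
  | succ k ih =>
    calc x (s + k + 1)
        = A *ᵥ (A ^ k *ᵥ x s + reachabilityMatrix A B k *ᵥ pastWindow u k (s + k)) +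
            B *ᵥ u (s + k) := by rw [hx, ih]
      _ = A ^ (k + 1) *ᵥ x s +
            (B *ᵥ u (s + k) + (A * reachabilityMatrix A B k) *ᵥ pastWindow u k (s + k)) := by
          rw [mulVec_add, mulVec_mulVec, mulVec_mulVec, ← pow_succ', add_assoc, add_comm (B *ᵥ _)]
      _ = A ^ (k + 1) *ᵥ x s +
            reachabilityMatrix A B (k + 1) *ᵥ pastWindow u (k + 1) (s + k + 1) := by
          rw [mulVec_pastWindow_succ, reachabilityMatrix_succ_submatrix_zero,
            reachabilityMatrix_succ_submatrix_succ]

theorem output_add (hx : IsTrajectory A B x u) (C : Matrix ω ι R) (s k : ℕ) :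
    C *ᵥ x (s + k) =
      (C * A ^ k) *ᵥ x s + (C * reachabilityMatrix A B k) *ᵥ pastWindow u k (s + k) := by
  rw [hx.state_add s k, mulVec_add, mulVec_mulVec, mulVec_mulVec]

theorem pastWindow_output (hx : IsTrajectory A B x u) (C : Matrix ω ι R) (s q : ℕ) :
    pastWindow (fun k => C *ᵥ x k) q (s + q) =
      observabilityMatrix A C q *ᵥ x s + markovToeplitz A B C q *ᵥ pastWindow u q (s + q) := by
  induction q with
  | zero => exact Subsingleton.elim _ _
  | succ q ih =>
    rw [← add_assoc, mulVec_pastWindow_succ, markovToeplitz_succ_submatrix_zero, zero_mulVec,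
      zero_add]
    ext ⟨i, r⟩
    cases i using Fin.cases with
    | zero =>
      have newest_output := congrFun (hx.output_add C s q) r
      rwa [← observabilityMatrix_succ_submatrix_zero,
        ← markovToeplitz_succ_submatrix_zero_succ] at newest_output
    | succ i =>
      have earlier_output := congrFun ih (i, r)
      rwa [← observabilityMatrix_succ_submatrix_succ, ← markovToeplitz_succ_submatrix_succ_succ,
        ← pastWindow_succ_succ] at earlier_output

end IsTrajectory

theorem arma_exact_fit_general {R ι μ ω : Type*} [Ring R] [Fintype ι] [DecidableEq ι] [Fintype μ]
    [Fintype ω] {A : Matrix ι ι R} {B : Matrix ι μ R} {C : Matrix ω ι R} {q : ℕ}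
    {K : Matrix ω (Fin q × ω) R} (hK : K * observabilityMatrix A C q = C * A ^ q)
    {x : ℕ → ι → R} {u : ℕ → μ → R} {z : ℕ → ω → R} (hx : IsTrajectory A B x u)
    (hz : ∀ k, z k = C *ᵥ x k) {t : ℕ} (ht : q ≤ t) :
    z t = K *ᵥ pastWindow z q t +
      (C * reachabilityMatrix A B q - K * markovToeplitz A B C q) *ᵥ pastWindow u q t := by
  obtain ⟨s, rfl⟩ := Nat.exists_eq_add_of_le' ht
  obtain rfl : z = fun k => C *ᵥ x k := funext hz
  have state_eliminated : (C * A ^ q) *ᵥ x s =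
      K *ᵥ pastWindow (fun k => C *ᵥ x k) q (s + q) -
        (K * markovToeplitz A B C q) *ᵥ pastWindow u q (s + q) := by
    rw [hx.pastWindow_output, mulVec_add, mulVec_mulVec, mulVec_mulVec, hK, add_sub_cancel_right]
  beta_reduce
  rw [hx.output_add, state_eliminated, sub_mulVec]
  abel

theorem mrow_eq_mul_reachabilityMatrix {n m p : ℕ} (A : Matrix (Fin n) (Fin n) ℝ)
    (B : Matrix (Fin n) (Fin m) ℝ) (C : Matrix (Fin p) (Fin n) ℝ) (q : ℕ) :
    Mrow A B C q = C * reachabilityMatrix A B q := by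
  ext r ⟨j, c⟩
  exact (mul_reachabilityMatrix_apply C A B q r j c).symm

theorem oqPinv_mul_oq {n p : ℕ} {A : Matrix (Fin n) (Fin n) ℝ} {C : Matrix (Fin p) (Fin n) ℝ}
    {q : ℕ} (hrank : (Oq A C q).rank = n) : OqPinv A C q * Oq A C q = 1 :=
  nonsing_inv_transpose_mul_self_mul_transpose_mul_self (hrank.trans (Fintype.card_fin n).symm)

/-- **Proposition 1.** If `O_q` has full column rank `n`, then with the
block rows `[α_1|…|α_q] := C A^q O_q⁺` and
`[β_1|…|β_q] := [C B | C A B | … | C A^{q−1} B] − C A^q O_q⁺ H_q`, every trajectory of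
the linear system satisfies the order-`q` ARMA relation
`z_t = Σ_{i=1}^q α_i z_{t−i} + Σ_{i=1}^q β_i u_{t−i}` for all `t ≥ q`,
where the block rows act on the stacked vectors `(z_{t−1};…;z_{t−q})` and
`(u_{t−1};…;u_{t−q})`. -/
theorem arma_exact_fit {n m p : ℕ}
    (A : Matrix (Fin n) (Fin n) ℝ) (B : Matrix (Fin n) (Fin m) ℝ)
    (C : Matrix (Fin p) (Fin n) ℝ)
    (q : ℕ) (hq : 1 ≤ q) (hrank : (Oq A C q).rank = n) :
    ∀ (x : ℕ → Fin n → ℝ) (u : ℕ → Fin m → ℝ) (z : ℕ → Fin p → ℝ),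
      (∀ k, x (k + 1) = A.mulVec (x k) + B.mulVec (u k)) →
      (∀ k, z k = C.mulVec (x k)) →
      ∀ t, q ≤ t →
        z t = (C * A ^ q * OqPinv A C q).mulVec
                (fun ir : Fin q × Fin p => z (t - 1 - (ir.1 : ℕ)) ir.2)
            + (Mrow A B C q - C * A ^ q * OqPinv A C q * Hq A B C q).mulVec
                (fun jc : Fin q × Fin m => u (t - 1 - (jc.1 : ℕ)) jc.2) := by
  intro x u z hx hz t ht
  have hK : C * A ^ q * OqPinv A C q * Oq A C q = C * A ^ q := by
    rw [Matrix.mul_assoc, oqPinv_mul_oq hrank, Matrix.mul_one]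
  rw [mrow_eq_mul_reachabilityMatrix]
  exact arma_exact_fit_general hK hx hz ht
end

section
/- (Corollary 1, exact ARMA fit of a linear time-varying system.) Fix t ≥ q and suppose the time-varying matrix O_q(t) := [C_t A_{t−1} A_{t−2} ⋯ A_{t−q}; C_{t−1} A_{t−2} ⋯ A_{t−q}; …; C_{t−q+1} A_{t−q}; C_{t−q}] ∈ ℝ^{((q+1)·p set to appropriate size)×n}, i.e., the matrix whose i-th block row (i = 0, …, q) is C_{t−i} A_{t−i−1} ⋯ A_{t−q} (with the last block row equal to C_{t−q}), restricted to its last q block rows O_q(t) = [C_{t−1}A_{t−2}⋯A_{t−q}; …; C_{t−q+1}A_{t−q}; C_{t−q}] ∈ ℝ^{qp×n}, has full column rank n. Let H_q(t) ∈ ℝ^{qp×qm} be the block matrix whose (i,j) block for 1 ≤ i, j ≤ q is C_{t−i} A_{t−i−1} ⋯ A_{t−j+1} B_{t−j} if j > i (interpreted as C_{t−i} B_{t−j} when j = i+1) and zero otherwise, and set O_q(t)⁺ := (O_q(t)ᵀ O_q(t))^{−1} O_q(t)ᵀ. Define Φ := A_{t−1} A_{t−2} ⋯ A_{t−q}, the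 block rows [α_1 | … | α_q] := C_t Φ O_q(t)⁺ and [β_1 | … | β_q] := [C_t B_{t−1} | C_t A_{t−1} B_{t−2} | … | C_t A_{t−1}⋯A_{t−q+1} B_{t−q}] − C_t Φ O_q(t)⁺ H_q(t). Then every pair of sequences x, u with x_{k+1} = A_k x_k + B_k u_k and z_k = C_k x_k satisfies z_t = Σ_{i=1}^{q} α_i z_{t−i} + Σ_{i=1}^{q} β_i u_{t−i}. -/
open Matrix Finset

/-- State-transition product `stm A a k = A_{a+k−1} ⋯ A_{a+1} A_a`
(so `stm A a k` maps the state at time `a` to the state at time `a + k`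
for the homogeneous part of `x_{j+1} = A_j x_j + B_j u_j`). -/
def stm {n : ℕ} (A : ℕ → Matrix (Fin n) (Fin n) ℝ) (a : ℕ) :
    ℕ → Matrix (Fin n) (Fin n) ℝ
  | 0 => 1
  | k + 1 => A (a + k) * stm A a k

/-- Time-varying observability-type matrix
`O_q(t) = [C_{t−1} A_{t−2}⋯A_{t−q}; …; C_{t−q+1} A_{t−q}; C_{t−q}]`:
block row `i` (0-indexed) is `C_{t−1−i} A_{t−2−i} ⋯ A_{t−q}`. -/
def OqTV {n p : ℕ} (A : ℕ → Matrix (Fin n) (Fin n) ℝ)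
    (Cm : ℕ → Matrix (Fin p) (Fin n) ℝ) (q t : ℕ) :
    Matrix (Fin q × Fin p) (Fin n) ℝ :=
  Matrix.of fun ir c =>
    (Cm (t - 1 - (ir.1 : ℕ)) * stm A (t - q) (q - 1 - (ir.1 : ℕ))) ir.2 c

/-- Time-varying block matrix `H_q(t)` whose (0-indexed) `(i,j)` block is
`C_{t−1−i} A_{t−2−i} ⋯ A_{t−j} B_{t−1−j}` if `j > i` (read as `C_{t−1−i} B_{t−2−i}`
when `j = i + 1`) and `0` otherwise. -/
def HqTV {n m p : ℕ} (A : ℕ → Matrix (Fin n) (Fin n) ℝ)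
    (B : ℕ → Matrix (Fin n) (Fin m) ℝ) (Cm : ℕ → Matrix (Fin p) (Fin n) ℝ)
    (q t : ℕ) : Matrix (Fin q × Fin p) (Fin q × Fin m) ℝ :=
  Matrix.of fun ir jc =>
    if (ir.1 : ℕ) < (jc.1 : ℕ) then
      (Cm (t - 1 - (ir.1 : ℕ)) * stm A (t - (jc.1 : ℕ)) ((jc.1 : ℕ) - (ir.1 : ℕ) - 1)
        * B (t - 1 - (jc.1 : ℕ))) ir.2 jc.2
    else 0

/-- Time-varying block row `[C_t B_{t−1} | C_t A_{t−1} B_{t−2} | … | C_t A_{t−1}⋯A_{t−q+1} B_{t−q}]`: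
block `j` (0-indexed) is `C_t A_{t−1} ⋯ A_{t−j} B_{t−1−j}`. -/
def MrowTV {n m p : ℕ} (A : ℕ → Matrix (Fin n) (Fin n) ℝ)
    (B : ℕ → Matrix (Fin n) (Fin m) ℝ) (Cm : ℕ → Matrix (Fin p) (Fin n) ℝ)
    (q t : ℕ) : Matrix (Fin p) (Fin q × Fin m) ℝ :=
  Matrix.of fun r jc =>
    (Cm t * stm A (t - (jc.1 : ℕ)) (jc.1 : ℕ) * B (t - 1 - (jc.1 : ℕ))) r jc.2

/-!
Unrolling the recursion from time `t − q` writes the stacked past outputs as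
`Z = O_q(t) x_{t−q} + H_q(t) U` and the current output as `z_t = C_t Φ x_{t−q} + M U`, where `U`
stacks the past inputs and `M` is the block row in the definition of `β`. Any `K` with
`K O_q(t) = C_t Φ` eliminates the unknown state: `z_t − K Z = (M − K H_q(t)) U`. Full column rank
makes the Gram matrix of `O_q(t)` invertible, so that `K = C_t Φ O_q(t)⁺` is such a matrix.
-/

section FullColumnRank

theorem isUnit_of_rank_eq_card_s4 {n K : Type*} [Fintype n] [DecidableEq n] [Field K]
    {M : Matrix n n K} (h : M.rank = Fintype.card n) : IsUnit M := by
  rw [← linearIndependent_cols_iff_isUnit, linearIndependent_iff_card_eq_finrank_span, ← h,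
    rank_eq_finrank_span_cols]
  rfl

theorem inv_transpose_mul_self_mul_transpose_mul_cancel {m n K : Type*} [Fintype m] [Fintype n]
    [DecidableEq n] [Field K] [LinearOrder K] [IsStrictOrderedRing K] {M : Matrix m n K}
    (h : M.rank = Fintype.card n) : (Mᵀ * M)⁻¹ * Mᵀ * M = 1 := by
  have hGram : IsUnit (Mᵀ * M) := isUnit_of_rank_eq_card_s4 (by rw [rank_transpose_mul_self, h])
  rw [Matrix.mul_assoc, nonsing_inv_mul _ ((isUnit_iff_isUnit_det _).mp hGram)]

end FullColumnRank

theorem of_blocks_mulVec {l ι κ R : Type*} [Fintype ι] [Fintype κ] [NonUnitalNonAssocSemiring R]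
    (F : ι → Matrix l κ R) (w : ι → κ → R) :
    (of fun r (jc : ι × κ) => F jc.1 r jc.2) *ᵥ (fun jc => w jc.1 jc.2) = ∑ j, F j *ᵥ w j := by
  ext r
  simp [mulVec, dotProduct, Fintype.sum_prod_type]

/-- The regressor `(w_{t−1}; …; w_{t−q})`: the `q` values of the signal `w` preceding time `t`,
stacked into one vector, most recent first. Block `i` (0-indexed) is `w_{t−1−i}`. -/
def lagStack {κ R : Type*} (w : ℕ → κ → R) (q t : ℕ) : Fin q × κ → R :=
  fun ir => w (t - 1 - (ir.1 : ℕ)) ir.2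

theorem lagStack_apply {κ R : Type*} (w : ℕ → κ → R) (q t : ℕ) (i : Fin q) (r : κ) :
    lagStack w q t (i, r) = w (t - 1 - i) r :=
  rfl

section BlockMatrices

variable {n m p : ℕ} (A : ℕ → Matrix (Fin n) (Fin n) ℝ) (B : ℕ → Matrix (Fin n) (Fin m) ℝ)
  (Cm : ℕ → Matrix (Fin p) (Fin n) ℝ)

theorem stm_succ_eq_stm_mul (a k : ℕ) : stm A a (k + 1) = stm A (a + 1) k * A a := by
  induction k with
  | zero => simp [stm]
  | succ k ih =>
    calc stm A a (k + 2) = A (a + (k + 1)) * (stm A (a + 1) k * A a) := by rw [stm, ih]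
      _ = stm A (a + 1) (k + 1) * A a := by
        rw [stm, Matrix.mul_assoc, Nat.add_right_comm a 1 k, Nat.add_assoc]

theorem OqTV_mulVec_apply (q t : ℕ) (v : Fin n → ℝ) (i : Fin q) (r : Fin p) :
    (OqTV A Cm q t *ᵥ v) (i, r) = ((Cm (t - 1 - i) * stm A (t - q) (q - 1 - i)) *ᵥ v) r :=
  rfl

theorem MrowTV_mulVec_lagStack (q t : ℕ) (u : ℕ → Fin m → ℝ) :
    MrowTV A B Cm q t *ᵥ lagStack u q t =
      ∑ j ∈ range q, (Cm t * stm A (t - j) j * B (t - 1 - j)) *ᵥ u (t - 1 - j) := by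
  rw [sum_range]
  exact of_blocks_mulVec (fun j : Fin q => Cm t * stm A (t - j) j * B (t - 1 - j))
    (fun j => u (t - 1 - j))

theorem HqTV_mulVec_lagStack_apply (q t : ℕ) (u : ℕ → Fin m → ℝ) (i : Fin q) (r : Fin p) :
    (HqTV A B Cm q t *ᵥ lagStack u q t) (i, r) =
      (∑ j ∈ Ico (i + 1 : ℕ) q,
        (Cm (t - 1 - i) * stm A (t - j) (j - i - 1) * B (t - 1 - j)) *ᵥ u (t - 1 - j)) r := by
  let F : ℕ → Matrix (Fin p) (Fin m) ℝ := fun j =>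
    Cm (t - 1 - i) * stm A (t - j) (j - i - 1) * B (t - 1 - j)
  have hIco : Ico (i + 1 : ℕ) q = {j ∈ range q | (i : ℕ) < j} := by
    ext j
    simp [and_comm]
  have hrow : HqTV A B Cm q t (i, r) =
      fun jc : Fin q × Fin m => (if (i : ℕ) < jc.1 then F jc.1 else 0) r jc.2 := by
    ext jc
    simp only [HqTV, of_apply, F]
    split_ifs <;> rfl
  calc (HqTV A B Cm q t *ᵥ lagStack u q t) (i, r)
      = (∑ j : Fin q, (if (i : ℕ) < j then F j else 0) *ᵥ u (t - 1 - j)) r := by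
        rw [← of_blocks_mulVec]
        exact congrArg (· ⬝ᵥ lagStack u q t) hrow
    _ = (∑ j ∈ Ico (i + 1 : ℕ) q, F j *ᵥ u (t - 1 - j)) r := by
        rw [hIco, sum_filter, sum_range]
        refine congrFun (sum_congr rfl fun j _ => ?_) r
        rw [apply_ite (· *ᵥ u (t - 1 - j)), zero_mulVec]

end BlockMatrices

section Trajectories

variable {n m p : ℕ} {A : ℕ → Matrix (Fin n) (Fin n) ℝ} {B : ℕ → Matrix (Fin n) (Fin m) ℝ}
  {Cm : ℕ → Matrix (Fin p) (Fin n) ℝ} {x : ℕ → Fin n → ℝ} {u : ℕ → Fin m → ℝ} {z : ℕ → Fin p → ℝ}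

theorem stm_mulVec_state_succ (hx : ∀ k, x (k + 1) = A k *ᵥ x k + B k *ᵥ u k) (a k : ℕ) :
    stm A (a + 1) k *ᵥ x (a + 1) = stm A a (k + 1) *ᵥ x a + (stm A (a + 1) k * B a) *ᵥ u a := by
  rw [hx, stm_succ_eq_stm_mul, mulVec_add, mulVec_mulVec, mulVec_mulVec]

theorem state_eq_stm_mulVec_add_sum (hx : ∀ k, x (k + 1) = A k *ᵥ x k + B k *ᵥ u k)
    {t i d : ℕ} (hid : i ≤ d) (hdt : d ≤ t) :
    x (t - i) = stm A (t - d) (d - i) *ᵥ x (t - d) +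
      ∑ j ∈ Ico i d, (stm A (t - j) (j - i) * B (t - 1 - j)) *ᵥ u (t - 1 - j) := by
  induction d, hid using Nat.le_induction with
  | base => simp [stm]
  | succ d hid ih =>
    have hstep := stm_mulVec_state_succ hx (t - (d + 1)) (d - i)
    have htime : t - (d + 1) + 1 = t - d := by omega
    rw [htime, ← Nat.sub_add_comm hid] at hstep
    rw [ih (Nat.le_of_succ_le hdt), hstep, sum_Ico_succ_top hid, Nat.sub_right_comm t 1 d,
      Nat.sub_sub t d 1, add_assoc, add_comm (∑ j ∈ Ico i d, _)]

theorem output_eq_mulVec_add_sum (hx : ∀ k, x (k + 1) = A k *ᵥ x k + B k *ᵥ u k)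
    (hz : ∀ k, z k = Cm k *ᵥ x k) {t i d : ℕ} (hid : i ≤ d) (hdt : d ≤ t) :
    z (t - i) = (Cm (t - i) * stm A (t - d) (d - i)) *ᵥ x (t - d) +
      ∑ j ∈ Ico i d, (Cm (t - i) * stm A (t - j) (j - i) * B (t - 1 - j)) *ᵥ u (t - 1 - j) := by
  rw [hz, state_eq_stm_mulVec_add_sum hx hid hdt]
  simp only [mulVec_add, mulVec_sum, mulVec_mulVec, Matrix.mul_assoc]

theorem output_eq_mulVec_add_MrowTV_mulVec (hx : ∀ k, x (k + 1) = A k *ᵥ x k + B k *ᵥ u k)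
    (hz : ∀ k, z k = Cm k *ᵥ x k) {q t : ℕ} (ht : q ≤ t) :
    z t = (Cm t * stm A (t - q) q) *ᵥ x (t - q) + MrowTV A B Cm q t *ᵥ lagStack u q t := by
  rw [MrowTV_mulVec_lagStack, range_eq_Ico]
  exact output_eq_mulVec_add_sum hx hz (Nat.zero_le q) ht

theorem lagStack_output_eq (hx : ∀ k, x (k + 1) = A k *ᵥ x k + B k *ᵥ u k)
    (hz : ∀ k, z k = Cm k *ᵥ x k) {q t : ℕ} (ht : q ≤ t) :
    lagStack z q t = OqTV A Cm q t *ᵥ x (t - q) + HqTV A B Cm q t *ᵥ lagStack u q t := by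
  ext ⟨i, r⟩
  have hout := output_eq_mulVec_add_sum hx hz (Nat.succ_le_of_lt i.isLt) ht
  rw [lagStack_apply, Pi.add_apply, OqTV_mulVec_apply, HqTV_mulVec_lagStack_apply, ← Pi.add_apply]
  simp only [Nat.sub_right_comm _ 1 (i : ℕ), Nat.sub_sub _ (i : ℕ) 1]
  exact congrFun hout r

theorem arma_exact_fit_tv_general (hx : ∀ k, x (k + 1) = A k *ᵥ x k + B k *ᵥ u k)
    (hz : ∀ k, z k = Cm k *ᵥ x k) {q t : ℕ} (ht : q ≤ t) {K : Matrix (Fin p) (Fin q × Fin p) ℝ}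
    (hK : K * OqTV A Cm q t = Cm t * stm A (t - q) q) :
    z t = K *ᵥ lagStack z q t +
      (MrowTV A B Cm q t - K * HqTV A B Cm q t) *ᵥ lagStack u q t := by
  have hKz : K *ᵥ lagStack z q t = (Cm t * stm A (t - q) q) *ᵥ x (t - q) +
      (K * HqTV A B Cm q t) *ᵥ lagStack u q t := by
    rw [lagStack_output_eq hx hz ht, mulVec_add, mulVec_mulVec, mulVec_mulVec, hK]
  rw [hKz, sub_mulVec, output_eq_mulVec_add_MrowTV_mulVec hx hz ht]
  abel

end Trajectories

/-- **Corollary 1.** Exact ARMA fit of a linear time-varying system.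
Fix `t ≥ q` and suppose `O_q(t)` has full column rank `n`. With
`Φ := A_{t−1}⋯A_{t−q}`, `O_q(t)⁺ := (O_q(t)ᵀ O_q(t))⁻¹ O_q(t)ᵀ`,
`[α_1|…|α_q] := C_t Φ O_q(t)⁺` and
`[β_1|…|β_q] := [C_t B_{t−1} | … | C_t A_{t−1}⋯A_{t−q+1} B_{t−q}] − C_t Φ O_q(t)⁺ H_q(t)`,
every trajectory satisfies `z_t = Σ_{i=1}^q α_i z_{t−i} + Σ_{i=1}^q β_i u_{t−i}`. -/
theorem arma_exact_fit_tv {n m p : ℕ}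
    (A : ℕ → Matrix (Fin n) (Fin n) ℝ) (B : ℕ → Matrix (Fin n) (Fin m) ℝ)
    (Cm : ℕ → Matrix (Fin p) (Fin n) ℝ)
    (q t : ℕ) (hq : 1 ≤ q) (ht : q ≤ t)
    (hrank : (OqTV A Cm q t).rank = n) :
    ∀ (x : ℕ → Fin n → ℝ) (u : ℕ → Fin m → ℝ) (z : ℕ → Fin p → ℝ),
      (∀ k, x (k + 1) = (A k).mulVec (x k) + (B k).mulVec (u k)) →
      (∀ k, z k = (Cm k).mulVec (x k)) →
      z t = (Cm t * stm A (t - q) q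
              * (((OqTV A Cm q t)ᵀ * OqTV A Cm q t)⁻¹ * (OqTV A Cm q t)ᵀ)).mulVec
              (fun ir : Fin q × Fin p => z (t - 1 - (ir.1 : ℕ)) ir.2)
          + (MrowTV A B Cm q t
              - Cm t * stm A (t - q) q
                * (((OqTV A Cm q t)ᵀ * OqTV A Cm q t)⁻¹ * (OqTV A Cm q t)ᵀ)
                * HqTV A B Cm q t).mulVec
              (fun jc : Fin q × Fin m => u (t - 1 - (jc.1 : ℕ)) jc.2) := by
  intro x u z hx hz
  have hleft := inv_transpose_mul_self_mul_transpose_mul_cancel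
    (hrank.trans (Fintype.card_fin n).symm)
  exact arma_exact_fit_tv_general hx hz ht (by rw [Matrix.mul_assoc, hleft, Matrix.mul_one])
end

section
/- (Output determined by the last q outputs and inputs.) Suppose O_q has full column rank n. Let x, x' : ℕ → ℝ^n and u, u' : ℕ → ℝ^m be two trajectories of the same system, i.e., x_{k+1} = A x_k + B u_k and x'_{k+1} = A x'_k + B u'_k for all k. If for some t ≥ q we have C x_{t−i} = C x'_{t−i} and u_{t−i} = u'_{t−i} for all i = 1, …, q, then C x_t = C x'_t. -/
open Matrix

/-!
The difference of two trajectories with equal inputs evolves autonomously: after `j` steps it is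
multiplied by `A ^ j`. Equal outputs on a window of length `q` therefore put the difference `d` of
the states at the start of the window in the kernel of `O_q`. The outputs just after the window
differ by `C A ^ q d`, so they agree whenever `ker O_q ⊆ ker (C A ^ q)`, and in particular when
`O_q` has full column rank.
-/

open LinearMap (ker)

section Trajectories

variable {R M N U : Type*} [Semiring R] [AddCommGroup M] [Module R M] [AddCommGroup N] [Module R N]

/-- The `q`-step unobservable subspace of the system with state map `f` and output map `c`: the
initial states whose first `q` outputs under zero input vanish. It is the coordinate-free form of
the kernel of `O_q`. -/
def unobservableSubmodule (f : Module.End R M) (c : M →ₗ[R] N) (q : ℕ) : Submodule R M :=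
  ⨅ i < q, ker (c ∘ₗ f ^ i)

theorem mem_unobservableSubmodule {f : Module.End R M} {c : M →ₗ[R] N} {q : ℕ} {v : M} :
    v ∈ unobservableSubmodule f c q ↔ ∀ i < q, c ((f ^ i) v) = 0 := by
  simp only [unobservableSubmodule, Submodule.mem_iInf, LinearMap.mem_ker, LinearMap.comp_apply]

variable {f : Module.End R M} {g : U → M} {x x' : ℕ → M} {u u' : ℕ → U}

theorem trajectory_sub_eq_pow_apply_sub
    (hx : ∀ k, x (k + 1) = f (x k) + g (u k)) (hx' : ∀ k, x' (k + 1) = f (x' k) + g (u' k))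
    {s j : ℕ} (hu : ∀ i < j, u (s + i) = u' (s + i)) :
    x (s + j) - x' (s + j) = (f ^ j) (x s - x' s) := by
  induction j with
  | zero => simp
  | succ j ih =>
    calc x (s + (j + 1)) - x' (s + (j + 1))
        = f (x (s + j) - x' (s + j)) := by
          rw [← add_assoc, hx, hx', hu j j.lt_succ_self, add_sub_add_right_eq_sub, map_sub]
      _ = f ((f ^ j) (x s - x' s)) := by rw [ih fun i hi => hu i (hi.trans j.lt_succ_self)]
      _ = (f ^ (j + 1)) (x s - x' s) := by rw [pow_succ', Module.End.mul_apply]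

theorem trajectory_sub_mem_unobservableSubmodule {c : M →ₗ[R] N}
    (hx : ∀ k, x (k + 1) = f (x k) + g (u k)) (hx' : ∀ k, x' (k + 1) = f (x' k) + g (u' k))
    {s q : ℕ} (hu : ∀ i < q, u (s + i) = u' (s + i))
    (hz : ∀ i < q, c (x (s + i)) = c (x' (s + i))) :
    x s - x' s ∈ unobservableSubmodule f c q := by
  refine mem_unobservableSubmodule.mpr fun i hi => ?_
  rw [← trajectory_sub_eq_pow_apply_sub hx hx' fun j hj => hu j (hj.trans hi), map_sub, hz i hi,
    sub_self]

theorem output_determined_by_past_general (f : Module.End R M) (g : U → M) (c : M →ₗ[R] N) (q : ℕ)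
    (hker : unobservableSubmodule f c q ≤ ker (c ∘ₗ f ^ q))
    (x x' : ℕ → M) (u u' : ℕ → U)
    (hx : ∀ k, x (k + 1) = f (x k) + g (u k)) (hx' : ∀ k, x' (k + 1) = f (x' k) + g (u' k))
    (t : ℕ) (ht : q ≤ t)
    (hz : ∀ i, 1 ≤ i → i ≤ q → c (x (t - i)) = c (x' (t - i)))
    (hu : ∀ i, 1 ≤ i → i ≤ q → u (t - i) = u' (t - i)) :
    c (x t) = c (x' t) := by
  obtain ⟨s, rfl⟩ := Nat.exists_eq_add_of_le' ht
  have window {i : ℕ} (hi : i < q) : s + q - (q - i) = s + i := by omega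
  have hu_window : ∀ i < q, u (s + i) = u' (s + i) := fun i hi =>
    window hi ▸ hu (q - i) (by omega) (by omega)
  have hz_window : ∀ i < q, c (x (s + i)) = c (x' (s + i)) := fun i hi =>
    window hi ▸ hz (q - i) (by omega) (by omega)
  have hd : c ((f ^ q) (x s - x' s)) = 0 :=
    hker (trajectory_sub_mem_unobservableSubmodule hx hx' hu_window hz_window)
  rwa [← trajectory_sub_eq_pow_apply_sub hx hx' hu_window, map_sub, sub_eq_zero] at hd

end Trajectories

theorem ker_toLin'_eq_bot_of_rank_eq_card {K m n : Type*} [Field K] [Fintype n] [DecidableEq n]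
    {M : Matrix m n K} (hM : M.rank = Fintype.card n) : ker (toLin' M) = ⊥ := by
  have rank_nullity : M.rank + Module.finrank K (ker (toLin' M)) = Fintype.card n := by
    rw [rank, ← toLin'_apply', LinearMap.finrank_range_add_finrank_ker,
      Module.finrank_fintype_fun_eq_card]
  exact Submodule.finrank_eq_zero.mp (by omega)

section ObservabilityMatrix

variable {n p : ℕ} (A : Matrix (Fin n) (Fin n) ℝ) (C : Matrix (Fin p) (Fin n) ℝ) (q : ℕ)

theorem Oq_mulVec_apply (v : Fin n → ℝ) (i : Fin q) (r : Fin p) :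
    (Oq A C q *ᵥ v) (i, r) = (C *ᵥ (A ^ (i.rev : ℕ) *ᵥ v)) r := by
  have row_power : (i.rev : ℕ) = q - 1 - i := by rw [Fin.val_rev]; omega
  rw [mulVec_mulVec, row_power]
  rfl

theorem ker_toLin'_Oq :
    ker (toLin' (Oq A C q)) = unobservableSubmodule (toLin' A) (toLin' C) q := by
  ext v
  calc v ∈ ker (toLin' (Oq A C q))
      ↔ ∀ i : Fin q, C *ᵥ (A ^ (i.rev : ℕ) *ᵥ v) = 0 := by
        simp only [LinearMap.mem_ker, toLin'_apply, funext_iff, Prod.forall, Oq_mulVec_apply,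
          Pi.zero_apply]
    _ ↔ ∀ i : Fin q, C *ᵥ (A ^ (i : ℕ) *ᵥ v) = 0 :=
        (Fin.rev_surjective.forall (p := fun i : Fin q => C *ᵥ (A ^ (i : ℕ) *ᵥ v) = 0)).symm
    _ ↔ v ∈ unobservableSubmodule (toLin' A) (toLin' C) q := by
        simp only [mem_unobservableSubmodule, ← toLin'_pow, toLin'_apply, Fin.forall_iff]

variable {A C q} in
theorem unobservableSubmodule_eq_bot_of_rank_Oq_eq (hrank : (Oq A C q).rank = n) :
    unobservableSubmodule (toLin' A) (toLin' C) q = ⊥ := by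
  rw [← ker_toLin'_Oq, ker_toLin'_eq_bot_of_rank_eq_card (by rw [hrank, Fintype.card_fin])]

end ObservabilityMatrix

/-- If `O_q` has full column rank `n`, and two trajectories of the
same system agree in their outputs `C x_{t−i} = C x'_{t−i}` and inputs
`u_{t−i} = u'_{t−i}` for `i = 1, …, q` (with `t ≥ q`), then their outputs agree at
time `t`: `C x_t = C x'_t`. -/
theorem output_determined_by_past {n m p : ℕ}
    (A : Matrix (Fin n) (Fin n) ℝ) (B : Matrix (Fin n) (Fin m) ℝ)
    (C : Matrix (Fin p) (Fin n) ℝ)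
    (q : ℕ) (hq : 1 ≤ q) (hrank : (Oq A C q).rank = n)
    (x x' : ℕ → Fin n → ℝ) (u u' : ℕ → Fin m → ℝ)
    (hx : ∀ k, x (k + 1) = A.mulVec (x k) + B.mulVec (u k))
    (hx' : ∀ k, x' (k + 1) = A.mulVec (x' k) + B.mulVec (u' k))
    (t : ℕ) (ht : q ≤ t)
    (hz : ∀ i, 1 ≤ i → i ≤ q → C.mulVec (x (t - i)) = C.mulVec (x' (t - i)))
    (hu : ∀ i, 1 ≤ i → i ≤ q → u (t - i) = u' (t - i)) :
    C.mulVec (x t) = C.mulVec (x' t) :=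
  output_determined_by_past_general (toLin' A) B.mulVec (toLin' C) q
    ((unobservableSubmodule_eq_bot_of_rank_Oq_eq hrank).le.trans bot_le) x x' u u' hx hx' t ht hz hu
end
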